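/- Let F be a homeomorphism of the annulus A = T^1 × R homotopic to the identity, f a lift of F, and K a nonempty compact F-invariant subset of A whose rotation set is a single point {α}. Then the sequence of functions z ↦ (p₁(f^n(z)) − p₁(z))/n converges uniformly on π^{-1}(K) to the constant α. -/

import Mathlib

open MeasureTheory Filter Set

noncomputable section

/-- The infinite annulus `𝔸 = T¹ × ℝ`. -/
abbrev 𝔸 : Type := AddCircle (1 : ℝ) × ℝ

/-- The covering projection `π : ℝ² → 𝔸`. -/
def πA : ℝ × ℝ → 𝔸 := fun p => ((p.1 : AddCircle (1 : ℝ)), p.2)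

/-- The deck transformation `T(x,y) = (x+1,y)`. -/
def TA : ℝ × ℝ → ℝ × ℝ := fun p => (p.1 + 1, p.2)

/-- The rotation set of a compact invariant set `K`. -/
def rotSet (F : 𝔸 ≃ₜ 𝔸) (φ : 𝔸 → ℝ) (K : Set 𝔸) : Set ℝ :=
  {r | ∃ μ : Measure 𝔸, IsProbabilityMeasure μ ∧
        (∀ s : Set 𝔸, MeasurableSet s → μ ((⇑F) ⁻¹' s) = μ s) ∧
        μ Kᶜ = 0 ∧ r = ∫ x, φ x ∂μ}

/-!
A Birkhoff average `(1/n) ∑_{i<n} φ(Fⁱ x)` is the integral of `φ` against the empirical measure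
carried by an orbit segment of `x`. The displacement `p₁ ∘ fⁿ - p₁` telescopes into the Birkhoff sum
of `φ`, so it suffices to control empirical measures. On a compact invariant set, any limit of
empirical measures of orbit segments of length tending to infinity is an invariant probability
measure (Krylov–Bogolyubov), hence integrates `φ` to `α`. As the base points may vary along with the
lengths, the convergence is uniform.
-/

open scoped Topology NNReal BoundedContinuousFunction

section BirkhoffSum

variable {X Y G : Type*}

theorem birkhoffSum_apply_of_semiconj [AddCommMonoid G] {π : Y → X} {S : Y → Y} {T : X → X}
    (h : Function.Semiconj π S T) (g : X → G) (n : ℕ) (y : Y) :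
    birkhoffSum T g n (π y) = birkhoffSum S (g ∘ π) n y := by
  simp only [birkhoffSum, Function.comp_apply, (h.iterate_right _).eq]

theorem birkhoffAverage_apply_of_semiconj (R : Type*) [DivisionSemiring R] [AddCommMonoid G]
    [Module R G] {π : Y → X} {S : Y → Y} {T : X → X} (h : Function.Semiconj π S T) (g : X → G)
    (n : ℕ) (y : Y) :
    birkhoffAverage R T g n (π y) = birkhoffAverage R S (g ∘ π) n y := by
  simp only [birkhoffAverage, birkhoffSum_apply_of_semiconj h]

theorem birkhoffSum_comp_sub_self [AddCommGroup G] (T : X → X) (g : X → G) (n : ℕ) (x : X) :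
    birkhoffSum T (g ∘ T - g) n x = g (T^[n] x) - g x := by
  rw [birkhoffSum_sub, ← birkhoffSum_apply_of_semiconj (Function.Commute.refl T).semiconj,
    birkhoffSum_apply_sub_birkhoffSum]

end BirkhoffSum

section EmpiricalMeasure

variable {X : Type*} [MeasurableSpace X]

/-- The empirical measure `(1/n) ∑_{i<n} δ_{Tⁱ x}` of the orbit segment of length `n` of `x` under
`T`. The scalars are `ℝ≥0` since `birkhoffAverage` requires a division semiring, which `ℝ≥0∞` is
not. For `n = 0` this is the zero measure. -/
def empiricalMeasure (T : X → X) (n : ℕ) (x : X) : Measure X :=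
  birkhoffAverage ℝ≥0 T Measure.dirac n x

instance isFiniteMeasure_empiricalMeasure (T : X → X) (n : ℕ) (x : X) :
    IsFiniteMeasure (empiricalMeasure T n x) := by
  unfold empiricalMeasure birkhoffAverage birkhoffSum
  infer_instance

theorem isProbabilityMeasure_empiricalMeasure (T : X → X) {n : ℕ} (hn : n ≠ 0) (x : X) :
    IsProbabilityMeasure (empiricalMeasure T n x) where
  measure_univ := by
    simp [empiricalMeasure, birkhoffAverage, birkhoffSum, ENNReal.smul_def, hn,
      ENNReal.inv_mul_cancel]

theorem integral_empiricalMeasure [MeasurableSingletonClass X] {E : Type*} [NormedAddCommGroup E]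
    [NormedSpace ℝ E] [CompleteSpace E] (T : X → X) (n : ℕ) (x : X) (g : X → E) :
    ∫ y, g y ∂empiricalMeasure T n x = birkhoffAverage ℝ T g n x := by
  have hg (i : ℕ) : Integrable g (Measure.dirac (T^[i] x)) := integrable_dirac enorm_lt_top
  simp only [empiricalMeasure, birkhoffAverage, birkhoffSum, integral_smul_nnreal_measure,
    integral_finsetSum_measure fun i _ => hg i, integral_dirac, NNReal.smul_def, NNReal.coe_inv,
    NNReal.coe_natCast]

end EmpiricalMeasure

section Limits

variable {ι X : Type*}

theorem tendsto_birkhoffAverage_apply_sub_of_tendsto (𝕜 : Type*) [RCLike 𝕜] {E : Type*}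
    [NormedAddCommGroup E] [NormedSpace 𝕜 E] {l : Filter ι} {n : ι → ℕ} (hn : Tendsto n l atTop)
    (T : X → X) (x : ι → X) {g : X → E} (hg : Bornology.IsBounded (range g)) :
    Tendsto (fun i => birkhoffAverage 𝕜 T g (n i) (T (x i)) - birkhoffAverage 𝕜 T g (n i) (x i))
      l (𝓝 0) := by
  obtain ⟨C, hC⟩ := Metric.isBounded_range_iff.1 hg
  have hC_div : Tendsto (fun i => C / (n i : ℝ)) l (𝓝 0) :=
    tendsto_const_nhds.div_atTop (tendsto_natCast_atTop_atTop.comp hn)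
  refine squeeze_zero_norm (fun i => ?_) hC_div
  rw [← dist_eq_norm, dist_birkhoffAverage_apply_birkhoffAverage]
  gcongr
  exact hC _ _

variable [TopologicalSpace X] [MeasurableSpace X] [BorelSpace X]

theorem measurePreserving_of_tendsto_birkhoffAverage [HasOuterApproxClosed X] {T : X → X}
    (hT : Continuous T) {l : Filter ι} [l.NeBot] {n : ι → ℕ} (hn : Tendsto n l atTop) {x : ι → X}
    {μ : Measure X} [IsFiniteMeasure μ]
    (hμ : ∀ g : X →ᵇ ℝ,
      Tendsto (fun i => birkhoffAverage ℝ T g (n i) (x i)) l (𝓝 (∫ y, g y ∂μ))) :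
    MeasurePreserving T μ μ := by
  refine ⟨hT.measurable, ext_of_forall_integral_eq_of_IsFiniteMeasure fun g => ?_⟩
  rw [integral_map hT.aemeasurable g.continuous.aestronglyMeasurable, ← sub_eq_zero]
  have hdiff := tendsto_birkhoffAverage_apply_sub_of_tendsto ℝ hn T x g.isBounded_range
  simp only [birkhoffAverage_apply_of_semiconj ℝ (Function.Commute.refl T).semiconj] at hdiff
  exact tendsto_nhds_unique ((hμ (g.compContinuous ⟨T, hT⟩)).sub (hμ g)) hdiff

theorem exists_tendsto_birkhoffAverage_integral [CompactSpace X] [T2Space X] (T : X → X)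
    {U : Ultrafilter ι} {n : ι → ℕ} (hn : Tendsto n U atTop) (x : ι → X) :
    ∃ μ : Measure X, IsProbabilityMeasure μ ∧ ∀ g : X →ᵇ ℝ,
      Tendsto (fun i => birkhoffAverage ℝ T g (n i) (x i)) U (𝓝 (∫ y, g y ∂μ)) := by
  let P (i : ι) : FiniteMeasure X := ⟨empiricalMeasure T (n i) (x i), inferInstance⟩
  have hP : ∀ᶠ i in U, (P i).mass = 1 := by
    filter_upwards [hn.eventually_ne_atTop 0] with i hi
    have := isProbabilityMeasure_empiricalMeasure T hi (x i)
    simp [P, FiniteMeasure.mass]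
  obtain ⟨μ, hμ, hlim⟩ := isCompact_iff_ultrafilter_le_nhds'.1
    (isCompact_setOfPred_finiteMeasure_eq_of_compactSpace X 1) (U.map P) hP
  have hμ_prob : IsProbabilityMeasure (μ : Measure X) :=
    ⟨by rw [← FiniteMeasure.ennreal_mass, show μ.mass = 1 from hμ, ENNReal.coe_one]⟩
  refine ⟨μ, hμ_prob, fun g => ?_⟩
  simpa only [P, FiniteMeasure.toMeasure_mk, integral_empiricalMeasure] using
    FiniteMeasure.tendsto_iff_forall_integral_tendsto.1 hlim g

theorem tendstoUniformly_birkhoffAverage [CompactSpace X] [T2Space X] [HasOuterApproxClosed X]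
    {T : X → X} (hT : Continuous T) {g : X → ℝ} (hg : Continuous g) {α : ℝ}
    (hα : ∀ μ : Measure X, IsProbabilityMeasure μ → MeasurePreserving T μ μ → ∫ x, g x ∂μ = α) :
    TendstoUniformly (birkhoffAverage ℝ T g) (fun _ => α) atTop := by
  -- Uniformity in `x` is convergence along a filter on pairs `(n, x)`, so base points may vary.
  rw [← tendsto_prod_top_iff, tendsto_iff_ultrafilter]
  intro U hU
  have hn : Tendsto Prod.fst (U : Filter (ℕ × X)) atTop := tendsto_fst.mono_left hU
  obtain ⟨μ, hμ, hlim⟩ := exists_tendsto_birkhoffAverage_integral T hn Prod.snd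
  have hinv := measurePreserving_of_tendsto_birkhoffAverage hT hn hlim
  rw [← hα μ hμ hinv]
  exact hlim (.mkOfCompact ⟨g, hg⟩)

end Limits

section InvariantCompact

variable {X : Type*} [TopologicalSpace X] [TopologicalSpace.MetrizableSpace X] [MeasurableSpace X]
  [BorelSpace X]

theorem tendstoUniformlyOn_birkhoffAverage {T : X → X} (hT : Continuous T) {K : Set X}
    (hK : IsCompact K) (hKT : MapsTo T K K) {g : X → ℝ} (hg : ContinuousOn g K) {α : ℝ}
    (hα : ∀ μ : Measure X, IsProbabilityMeasure μ → MeasurePreserving T μ μ → μ Kᶜ = 0 →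
      ∫ x, g x ∂μ = α) :
    TendstoUniformlyOn (birkhoffAverage ℝ T g) (fun _ => α) atTop K := by
  have : CompactSpace K := isCompact_iff_compactSpace.1 hK
  have hsemi : Function.Semiconj ((↑) : K → X) (hKT.restrict T K K) T := fun _ => rfl
  have hemb : MeasurableEmbedding ((↑) : K → X) := .subtype_coe hK.measurableSet
  simp only [tendstoUniformlyOn_iff_tendstoUniformly_comp_coe,
    birkhoffAverage_apply_of_semiconj ℝ hsemi]
  refine tendstoUniformly_birkhoffAverage (hT.restrict hKT) hg.domRestrict fun μ hμ hinv => ?_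
  have hprob : IsProbabilityMeasure (μ.map ((↑) : K → X)) :=
    Measure.isProbabilityMeasure_map hemb.measurable.aemeasurable
  have hpres : MeasurePreserving T (μ.map ((↑) : K → X)) (μ.map (↑)) :=
    (hemb.measurable.measurePreserving μ).of_semiconj hinv hsemi hT.measurable
  have hcompl : μ.map ((↑) : K → X) Kᶜ = 0 := by simp [hemb.map_apply]
  exact (hemb.integral_map g).symm.trans (hα _ hprob hpres hcompl)

theorem stmt1_general {E : Type*} [TopologicalSpace E] {π : E → X} (hπ : Topology.IsQuotientMap π)
    {f : E → E} (hf : Continuous f) {F : X → X} (hlift : Function.Semiconj π f F)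
    {p : E → ℝ} (hp : Continuous p) {φ : X → ℝ} (hφ : ∀ z, φ (π z) = p (f z) - p z)
    {K : Set X} (hK : IsCompact K) (hKF : MapsTo F K K) {α : ℝ}
    (hα : ∀ μ : Measure X, IsProbabilityMeasure μ → MeasurePreserving F μ μ → μ Kᶜ = 0 →
      ∫ x, φ x ∂μ = α) :
    TendstoUniformlyOn (fun (n : ℕ) z => (p (f^[n] z) - p z) / n) (fun _ => α) atTop (π ⁻¹' K) := by
  have hφπ : φ ∘ π = p ∘ f - p := funext hφ
  have hF_cont : Continuous F := by
    rw [hπ.continuous_iff, ← hlift.comp_eq]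
    exact hπ.continuous.comp hf
  have hφ_cont : Continuous φ := by
    rw [hπ.continuous_iff, hφπ]
    exact (hp.comp hf).sub hp
  have havg (n : ℕ) (z : E) : birkhoffAverage ℝ F φ n (π z) = (p (f^[n] z) - p z) / n := by
    rw [birkhoffAverage_apply_of_semiconj ℝ hlift, hφπ, birkhoffAverage, birkhoffSum_comp_sub_self,
      smul_eq_mul, inv_mul_eq_div]
  simpa only [Function.comp_def, havg] using
    (tendstoUniformlyOn_birkhoffAverage hF_cont hK hKF hφ_cont.continuousOn hα).comp π

end InvariantCompact

theorem isQuotientMap_πA : Topology.IsQuotientMap πA :=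
  (QuotientAddGroup.isOpenQuotientMap_mk.prodMap .id).isQuotientMap

theorem stmt1
    (F : 𝔸 ≃ₜ 𝔸) (f : ℝ × ℝ → ℝ × ℝ) (hf : Continuous f)
    (hlift : ∀ p, πA (f p) = F (πA p)) (hdeck : ∀ p, f (TA p) = TA (f p))
    (K : Set 𝔸) (hKne : K.Nonempty) (hKcpt : IsCompact K) (hKinv : F '' K = K)
    (φ : 𝔸 → ℝ) (hφ : ∀ p : ℝ × ℝ, φ (πA p) = (f p).1 - p.1)
    (α : ℝ) (hrot : rotSet F φ K = {α}) :
    TendstoUniformlyOn (fun (n : ℕ) (p : ℝ × ℝ) => ((f^[n] p).1 - p.1) / n)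
      (fun _ => α) atTop (πA ⁻¹' K) := by
  refine stmt1_general isQuotientMap_πA hf hlift continuous_fst hφ hKcpt
    (mapsTo_iff_image_subset.2 hKinv.le) fun μ hμ hinv hμK => ?_
  exact hrot.subset
    ⟨μ, hμ, fun _ hs => hinv.measure_preimage hs.nullMeasurableSet, hμK, rfl⟩
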